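/- arXiv:0710.0163 — 4 statements merged into one kernel-verified Lean document; each statement's English description precedes it below -/
import Mathlib

section
/- Let V ⊆ ℂ be an open set, let D ⊆ V be dense in V, and let f : ℂ → ℂ be continuously real-differentiable on V (i.e., f is C¹ on V as a map of real vector spaces). If f is complex-differentiable at every point of D, then f is complex-differentiable at every point of V. -/
open Set

theorem range_restrictScalars_eq_preimage_range_coe
    (A : Type*) {R M N : Type*} [Semiring A] [Semiring R]
    [AddCommMonoid M] [TopologicalSpace M] [Module A M] [Module R M]
    [AddCommMonoid N] [TopologicalSpace N] [Module A N] [Module R N]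
    [LinearMap.CompatibleSMul M N A R] :
    range (ContinuousLinearMap.restrictScalars A : (M →L[R] N) → M →L[A] N) =
      (⇑) ⁻¹' range ((⇑) : (M →ₗ[R] N) → M → N) := by
  ext g
  constructor
  · rintro ⟨h, rfl⟩
    exact ⟨h, rfl⟩
  · rintro ⟨h, hg⟩
    exact ⟨⟨h, show Continuous h from hg ▸ g.continuous⟩, DFunLike.coe_injective hg⟩

theorem isClosed_range_restrictScalars
    (𝕜 : Type*) {R E F : Type*} [NormedField 𝕜] [Semiring R]
    [AddCommGroup E] [TopologicalSpace E] [Module 𝕜 E] [Module R E] [ContinuousSMul 𝕜 E]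
    [AddCommGroup F] [TopologicalSpace F] [IsTopologicalAddGroup F] [T2Space F]
    [Module 𝕜 F] [Module R F] [ContinuousConstSMul R F]
    [LinearMap.CompatibleSMul E F 𝕜 R] :
    IsClosed (range (ContinuousLinearMap.restrictScalars 𝕜 : (E →L[R] F) → E →L[𝕜] F)) := by
  rw [range_restrictScalars_eq_preimage_range_coe]
  exact (LinearMap.isClosed_range_coe E F (RingHom.id R)).preimage continuous_coeFun

theorem holomorphic_of_c1_and_holomorphic_on_dense_general
    (𝕜 : Type*) {𝕜' E F : Type*} [NontriviallyNormedField 𝕜] [NontriviallyNormedField 𝕜']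
    [NormedAlgebra 𝕜 𝕜']
    [NormedAddCommGroup E] [NormedSpace 𝕜 E] [NormedSpace 𝕜' E] [IsScalarTower 𝕜 𝕜' E]
    [NormedAddCommGroup F] [NormedSpace 𝕜 F] [NormedSpace 𝕜' F] [IsScalarTower 𝕜 𝕜' F]
    {D : Set E} {f : E → F} {x : E} (hx : x ∈ closure D)
    (hdiff : DifferentiableAt 𝕜 f x) (hcont : ContinuousWithinAt (fderiv 𝕜 f) D x)
    (hD : ∀ y ∈ D, DifferentiableAt 𝕜' f y) :
    DifferentiableAt 𝕜' f x := by
  have fderiv_mapsTo : MapsTo (fderiv 𝕜 f) D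
      (range (ContinuousLinearMap.restrictScalars 𝕜 : (E →L[𝕜'] F) → E →L[𝕜] F)) :=
    fun y hy ↦ ⟨fderiv 𝕜' f y, ((hD y hy).fderiv_restrictScalars 𝕜).symm⟩
  rw [differentiableAt_iff_restrictScalars 𝕜 hdiff]
  exact (isClosed_range_restrictScalars 𝕜).closure_subset (hcont.mem_closure hx fderiv_mapsTo)

/-- If `f : ℂ → ℂ` is C¹ over ℝ on an open set `V` and complex-differentiable
at every point of a dense subset `D` of `V`, then `f` is complex-differentiable
at every point of `V`. -/
theorem holomorphic_of_c1_and_holomorphic_on_dense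
    (V : Set ℂ) (hV : IsOpen V) (D : Set ℂ) (hDV : D ⊆ V)
    (hdense : V ⊆ closure D)
    (f : ℂ → ℂ)
    (hdiff : ∀ z ∈ V, DifferentiableAt ℝ f z)
    (hcont : ContinuousOn (fun z => fderiv ℝ f z) V)
    (hD : ∀ z ∈ D, DifferentiableAt ℂ f z) :
    ∀ z ∈ V, DifferentiableAt ℂ f z := by
  intro z hz
  exact holomorphic_of_c1_and_holomorphic_on_dense_general ℝ (hdense hz) (hdiff z hz)
    ((hcont z hz).mono hDV) hD
end

section
/- Let V ⊆ ℂ be an open set, let E ⊆ ℂ be a compact set of two-dimensional Lebesgue measure zero, and let f : ℂ → ℂ be Lipschitz on V. If f is complex-differentiable at every point of V \ E, then f is complex-differentiable at every point of V. -/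
open MeasureTheory

/-!
Removability is local, so suppose `f` is Lipschitz on a neighbourhood of a ball `s`. The averages
`x ↦ ⨍ y in ball 0 ε, f (x + y)` are holomorphic on `s` for small `ε`: for fixed `x` the integrand
is complex-differentiable in `x` for almost every `y`, and the Lipschitz constant of `f` dominates
its difference quotients, so one may differentiate under the integral. As `ε → 0` the averages
converge to `f` uniformly on `s`, and a locally uniform limit of holomorphic functions is
holomorphic.
-/

open Metric Set Filter
open scoped Topology NNReal

theorem add_mem_ball_add {G : Type*} [SeminormedAddCommGroup G] {x a b : G} {r s : ℝ}
    (ha : a ∈ ball x r) (hb : b ∈ ball 0 s) : a + b ∈ ball x (r + s) := by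
  rw [mem_ball] at *
  simpa using (dist_add_add_le a b x 0).trans_lt (add_lt_add ha hb)

section BallAverage

variable {G F : Type*} [NormedAddCommGroup G] [MeasurableSpace G] [NormedAddCommGroup F]
  {f : G → F} {x : G} {ε δ : ℝ}

/-- The mean of `f` over the ball of radius `ε` about `x`. It is written as a mean of translates
over a fixed ball, so that it can be differentiated in `x` under the integral; it is `0` when
`ε ≤ 0`. -/
noncomputable def ballAverage [NormedSpace ℝ F] (μ : Measure G) (f : G → F) (ε : ℝ) (x : G) : F :=
  ⨍ y in ball 0 ε, f (x + y) ∂μ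

variable [ProperSpace G] [OpensMeasurableSpace G] {μ : Measure G} [IsFiniteMeasureOnCompacts μ]

theorem integrableOn_ball_comp_const_add (hf : ContinuousOn f (ball x δ)) (hεδ : ε < δ) :
    IntegrableOn (fun y ↦ f (x + y)) (ball 0 ε) μ := by
  have hcont : ContinuousOn (fun y ↦ f (x + y)) (closedBall 0 ε) := by
    refine hf.comp (by fun_prop) fun y hy ↦ ?_
    simpa using (mem_closedBall_zero_iff.1 hy).trans_lt hεδ
  exact (hcont.integrableOn_compact (isCompact_closedBall 0 ε)).mono_set ball_subset_closedBall

variable [NormedSpace ℝ F] [CompleteSpace F] [μ.IsOpenPosMeasure]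

theorem dist_ballAverage_le {η : ℝ} (hε : 0 < ε) (hεδ : ε < δ) (hf : ContinuousOn f (ball x δ))
    (hη : ∀ y ∈ ball x ε, dist (f y) (f x) ≤ η) :
    dist (ballAverage μ f ε x) (f x) ≤ η := by
  refine (convex_closedBall (f x) η).set_average_mem isClosed_closedBall
    (measure_ball_pos μ 0 hε).ne' measure_ball_lt_top.ne ?_
    (integrableOn_ball_comp_const_add hf hεδ)
  filter_upwards [ae_restrict_mem measurableSet_ball] with y hy
  exact hη (x + y) (by simpa using hy)

theorem tendstoUniformlyOn_ballAverage {s : Set G} (hδ : 0 < δ)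
    (hf : UniformContinuousOn f (thickening δ s)) :
    TendstoUniformlyOn (ballAverage μ f) f (𝓝[>] 0) s := by
  rw [Metric.tendstoUniformlyOn_iff]
  intro η hη
  obtain ⟨ρ, hρ, hfρ⟩ := Metric.uniformContinuousOn_iff.1 hf (η / 2) (half_pos hη)
  filter_upwards [Ioo_mem_nhdsGT (lt_min hδ hρ)] with ε ⟨hε, hεmin⟩ x hx
  obtain ⟨hεδ, hερ⟩ := lt_min_iff.1 hεmin
  have hball : ball x δ ⊆ thickening δ s := ball_subset_thickening hx δ
  have hosc : ∀ y ∈ ball x ε, dist (f y) (f x) ≤ η / 2 := fun y hy ↦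
    (hfρ y (hball (ball_subset_ball hεδ.le hy)) x (hball (mem_ball_self hδ))
      ((mem_ball.1 hy).trans hερ)).le
  rw [dist_comm]
  exact (dist_ballAverage_le hε hεδ (hf.continuousOn.mono hball) hosc).trans_lt (half_lt_self hη)

end BallAverage

section Derivative

variable {𝕜 F : Type*} [RCLike 𝕜] [NormedAddCommGroup F] [NormedSpace ℝ F] [NormedSpace 𝕜 F]
  [CompleteSpace F] {μ : Measure 𝕜} [IsFiniteMeasureOnCompacts μ]
  {f : 𝕜 → F} {K : ℝ≥0} {x : 𝕜} {ε δ : ℝ}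

theorem differentiableAt_setIntegral_ball_comp_add (hεδ : ε < δ)
    (hf : LipschitzOnWith K f (ball x δ))
    (hdiff : ∀ᵐ y ∂μ.restrict (ball 0 ε), DifferentiableAt 𝕜 f (x + y)) :
    DifferentiableAt 𝕜 (fun z ↦ ∫ y in ball 0 ε, f (z + y) ∂μ) x := by
  have hmaps : ∀ y ∈ ball (0 : 𝕜) ε, MapsTo (· + y) (ball x (δ - ε)) (ball x δ) :=
    fun y hy z hz ↦ by simpa using add_mem_ball_add hz hy
  have hnhds : ball x (δ - ε) ∈ 𝓝 x := ball_mem_nhds x (sub_pos.2 hεδ)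
  have hmeas : ∀ᶠ z in 𝓝 x, AEStronglyMeasurable (fun y ↦ f (z + y)) (μ.restrict (ball 0 ε)) := by
    filter_upwards [hnhds] with z hz
    exact (hf.continuousOn.comp (by fun_prop) fun y hy ↦ hmaps y hy hz).aestronglyMeasurable
      measurableSet_ball
  have hmeas_deriv : AEStronglyMeasurable (fun y ↦ deriv f (x + y)) (μ.restrict (ball 0 ε)) :=
    ((stronglyMeasurable_deriv f).comp_measurable (measurable_const_add x)).aestronglyMeasurable
  have hlip : ∀ᵐ y ∂μ.restrict (ball 0 ε),
      LipschitzOnWith (Real.nnabs K) (fun z ↦ f (z + y)) (ball x (δ - ε)) := by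
    filter_upwards [ae_restrict_mem measurableSet_ball] with y hy
    simpa [Function.comp_def] using
      hf.comp (isometry_add_right y).lipschitz.lipschitzOnWith (hmaps y hy)
  have hderiv : ∀ᵐ y ∂μ.restrict (ball 0 ε),
      HasDerivAt (fun z ↦ f (z + y)) (deriv f (x + y)) x :=
    hdiff.mono fun y hy ↦ hy.hasDerivAt.comp_add_const x y
  exact (hasDerivAt_integral_of_dominated_loc_of_lip hnhds hmeas
    (integrableOn_ball_comp_const_add hf.continuousOn hεδ) hmeas_deriv hlip
    (integrableOn_const measure_ball_lt_top.ne) hderiv).2.differentiableAt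

theorem differentiableAt_ballAverage [SMulCommClass 𝕜 ℝ F] [μ.IsAddLeftInvariant] (hεδ : ε < δ)
    (hf : LipschitzOnWith K f (ball x δ))
    (hdiff : ∀ᵐ z ∂μ, z ∈ ball x δ → DifferentiableAt 𝕜 f z) :
    DifferentiableAt 𝕜 (ballAverage μ f ε) x := by
  have hdiff_translate : ∀ᵐ y ∂μ.restrict (ball 0 ε), DifferentiableAt 𝕜 f (x + y) := by
    filter_upwards [ae_restrict_of_ae ((eventually_add_left_iff μ x).2 hdiff),
      ae_restrict_mem measurableSet_ball] with y hy hyε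
    exact hy (by simpa using ball_subset_ball hεδ.le hyε)
  have hsmul : ballAverage μ f ε =
      fun z ↦ (μ.real (ball 0 ε))⁻¹ • ∫ y in ball 0 ε, f (z + y) ∂μ :=
    funext fun z ↦ setAverage_eq μ (fun y ↦ f (z + y)) (ball 0 ε)
  rw [hsmul]
  exact (differentiableAt_setIntegral_ball_comp_add hεδ hf hdiff_translate).const_smul _

end Derivative

section Removability

variable {F : Type*} [NormedAddCommGroup F] [NormedSpace ℂ F] [CompleteSpace F] {f : ℂ → F}

theorem differentiableOn_of_lipschitzOnWith_thickening_of_ae_differentiableAt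
    {s : Set ℂ} {K : ℝ≥0} {δ : ℝ}
    (hs : IsOpen s) (hδ : 0 < δ) (hf : LipschitzOnWith K f (thickening δ s))
    (hdiff : ∀ᵐ z, z ∈ thickening δ s → DifferentiableAt ℂ f z) :
    DifferentiableOn ℂ f s := by
  have hlim : TendstoUniformlyOn (ballAverage volume f) f (𝓝[>] 0) s :=
    tendstoUniformlyOn_ballAverage hδ hf.uniformContinuousOn
  refine hlim.tendstoLocallyUniformlyOn.differentiableOn ?_ hs
  filter_upwards [Ioo_mem_nhdsGT hδ] with ε hε x hx
  have hball : ball x δ ⊆ thickening δ s := ball_subset_thickening hx δ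
  exact (differentiableAt_ballAverage hε.2 (hf.mono hball)
    (hdiff.mono fun z hz hzx ↦ hz (hball hzx))).differentiableWithinAt

theorem holomorphic_of_lipschitz_and_holomorphic_off_null_set_general {V : Set ℂ} (hV : IsOpen V)
    (hf : LocallyLipschitzOn V f) (hdiff : ∀ᵐ z, z ∈ V → DifferentiableAt ℂ f z) :
    ∀ z ∈ V, DifferentiableAt ℂ f z := by
  intro z hz
  obtain ⟨K, t, ht, hft⟩ := hf hz
  rw [hV.nhdsWithin_eq hz] at ht
  obtain ⟨r, hr, hrtV⟩ := Metric.mem_nhds_iff.1 (inter_mem ht (hV.mem_nhds hz))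
  have hr₂ : 0 < r / 2 := half_pos hr
  have hthick : thickening (r / 2) (ball z (r / 2)) ⊆ t ∩ V := by
    rwa [_root_.thickening_ball hr₂ hr₂, add_halves]
  have hball : DifferentiableOn ℂ f (ball z (r / 2)) :=
    differentiableOn_of_lipschitzOnWith_thickening_of_ae_differentiableAt isOpen_ball hr₂
      (hft.mono fun w hw ↦ (hthick hw).1) (hdiff.mono fun w hw hwt ↦ hw (hthick hwt).2)
  exact hball.differentiableAt (ball_mem_nhds z hr₂)

end Removability

/-- Removability of compact Lebesgue-null sets for Lipschitz holomorphic
functions: if `f` is Lipschitz on an open set `V` and complex-differentiable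
off a compact set `E` of two-dimensional Lebesgue measure zero, then `f` is
complex-differentiable at every point of `V`. -/
theorem holomorphic_of_lipschitz_and_holomorphic_off_null_set
    (V : Set ℂ) (hV : IsOpen V) (E : Set ℂ) (hE : IsCompact E)
    (hE0 : volume E = 0)
    (f : ℂ → ℂ) (L : NNReal) (hf : LipschitzOnWith L f V)
    (hdiff : ∀ z ∈ V \ E, DifferentiableAt ℂ f z) :
    ∀ z ∈ V, DifferentiableAt ℂ f z :=
  holomorphic_of_lipschitz_and_holomorphic_off_null_set_general hV
    (fun _ _ ↦ ⟨L, V, self_mem_nhdsWithin, hf⟩)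
    ((measure_eq_zero_iff_ae_notMem.1 hE0).mono fun z hzE hzV ↦ hdiff z ⟨hzV, hzE⟩)
end

section
/- Let E ⊆ ℂ, p ∈ ℂ, and suppose there exist sequences (xₙ) and (yₙ) in E \ {p} converging to p and unit vectors u, v ∈ ℂ that are linearly independent over ℝ, such that (xₙ − p)/‖xₙ − p‖ → u and (yₙ − p)/‖yₙ − p‖ → v. If f, g : ℂ → ℂ are both Fréchet differentiable over ℝ at p and f z = g z for all z ∈ E ∪ {p}, then fderiv ℝ f p = fderiv ℝ g p. -/
open Filter Topology

/-!
Two functions that agree on `s` have the same difference quotients along `s`, so their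
differentials at `p` agree on the tangent cone of `s` at `p`, and hence everywhere if this cone
spans a dense subspace. Limits of normalized secants lie in the cone, and two linearly independent
ones already span `ℂ`.
-/

theorem eq_of_eqOn_of_mem_closure {X Y : Type*} [TopologicalSpace X] [TopologicalSpace Y]
    [T2Space Y] {s : Set X} {p : X} {f g : X → Y} (hp : p ∈ closure s)
    (hf : ContinuousWithinAt f s p) (hg : ContinuousWithinAt g s p) (hfg : Set.EqOn f g s) :
    f p = g p :=
  have : (𝓝[s] p).NeBot := mem_closure_iff_nhdsWithin_neBot.1 hp
  tendsto_nhds_unique_of_eventuallyEq hf hg hfg.eventuallyEq_nhdsWithin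

theorem span_eq_top_of_linearIndependent_of_mem {K V ι : Type*} [DivisionRing K] [AddCommGroup V]
    [Module K V] [Fintype ι] [Nonempty ι] {b : ι → V} {t : Set V} (hb : LinearIndependent K b)
    (hcard : Fintype.card ι = Module.finrank K V) (hbt : ∀ i, b i ∈ t) :
    Submodule.span K t = ⊤ :=
  top_unique <| hb.span_eq_top_of_card_eq_finrank hcard ▸
    Submodule.span_mono (Set.range_subset_iff.2 hbt)

section TangentCone

variable {α : Type*} {l : Filter α} [l.NeBot]

theorem mem_tangentConeAt_of_tendsto_smul_sub {R V : Type*} [AddCommGroup V] [SMul R V]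
    [TopologicalSpace V] [IsTopologicalAddGroup V] {s : Set V} {p u : V} {c : α → R} {x : α → V}
    (hxs : ∀ᶠ n in l, x n ∈ s) (hxp : Tendsto x l (𝓝 p))
    (hxu : Tendsto (fun n => c n • (x n - p)) l (𝓝 u)) :
    u ∈ tangentConeAt R s p :=
  mem_tangentConeAt_of_seq l c (fun n => x n - p) (tendsto_sub_nhds_zero_iff.2 hxp)
    (by simpa only [add_sub_cancel] using hxs) hxu

theorem mem_tangentConeAt_of_tendsto_sub_div_norm {s : Set ℂ} {p u : ℂ} {x : α → ℂ}
    (hxs : ∀ᶠ n in l, x n ∈ s) (hxp : Tendsto x l (𝓝 p))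
    (hxu : Tendsto (fun n => (x n - p) / (‖x n - p‖ : ℂ)) l (𝓝 u)) :
    u ∈ tangentConeAt ℝ s p := by
  have div_norm_eq (z : ℂ) : z / (‖z‖ : ℂ) = ‖z‖⁻¹ • z := by
    rw [Complex.real_smul, Complex.ofReal_inv, div_eq_inv_mul]
  simp only [div_norm_eq] at hxu
  exact mem_tangentConeAt_of_tendsto_smul_sub hxs hxp hxu

end TangentCone

section NormedSpace

variable {𝕜 V W : Type*} [NontriviallyNormedField 𝕜]
  [SeminormedAddCommGroup V] [NormedSpace 𝕜 V] [NormedAddCommGroup W] [NormedSpace 𝕜 W]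
  {s : Set V} {p : V} {f g : V → W}

theorem eqOn_tangentConeAt_of_hasFDerivWithinAt {f' g' : V →L[𝕜] W}
    (hf : HasFDerivWithinAt f f' s p) (hg : HasFDerivWithinAt g g' s p) (hfg : Set.EqOn f g s) :
    Set.EqOn f' g' (tangentConeAt 𝕜 s p) := by
  intro u hu
  have hp : p ∈ closure s := mem_closure_of_nonempty_tangentConeAt ⟨u, hu⟩
  have hfg_p : f p = g p :=
    eq_of_eqOn_of_mem_closure hp hf.continuousWithinAt hg.continuousWithinAt hfg
  exact hf.unique_on (hg.congr hfg hfg_p) hu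

theorem fderiv_determined_by_nonflat_set_general
    (hs : Dense (Submodule.span 𝕜 (tangentConeAt 𝕜 s p) : Set V))
    (hf : DifferentiableAt 𝕜 f p) (hg : DifferentiableAt 𝕜 g p) (hfg : Set.EqOn f g s) :
    fderiv 𝕜 f p = fderiv 𝕜 g p :=
  ContinuousLinearMap.ext_on hs <| eqOn_tangentConeAt_of_hasFDerivWithinAt
    hf.hasFDerivAt.hasFDerivWithinAt hg.hasFDerivAt.hasFDerivWithinAt hfg

end NormedSpace

/-- If a set `E` approaches `p` in two real-linearly independent directions,
then the real Fréchet derivative at `p` of any function is determined by its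
restriction to `E ∪ {p}`. -/
theorem fderiv_determined_by_nonflat_set
    (E : Set ℂ) (p : ℂ)
    (x y : ℕ → ℂ)
    (hx : ∀ n, x n ∈ E \ {p}) (hy : ∀ n, y n ∈ E \ {p})
    (hxp : Tendsto x atTop (𝓝 p)) (hyp : Tendsto y atTop (𝓝 p))
    (u v : ℂ) (hu : ‖u‖ = 1) (hv : ‖v‖ = 1)
    (huv : LinearIndependent ℝ ![u, v])
    (hxu : Tendsto (fun n => (x n - p) / (‖x n - p‖ : ℂ)) atTop (𝓝 u))
    (hyv : Tendsto (fun n => (y n - p) / (‖y n - p‖ : ℂ)) atTop (𝓝 v))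
    (f g : ℂ → ℂ)
    (hf : DifferentiableAt ℝ f p) (hg : DifferentiableAt ℝ g p)
    (hfg : ∀ z ∈ E ∪ {p}, f z = g z) :
    fderiv ℝ f p = fderiv ℝ g p := by
  have hu_mem : u ∈ tangentConeAt ℝ E p :=
    mem_tangentConeAt_of_tendsto_sub_div_norm (.of_forall fun n => (hx n).1) hxp hxu
  have hv_mem : v ∈ tangentConeAt ℝ E p :=
    mem_tangentConeAt_of_tendsto_sub_div_norm (.of_forall fun n => (hy n).1) hyp hyv
  have hspan : Submodule.span ℝ (tangentConeAt ℝ E p) = ⊤ :=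
    span_eq_top_of_linearIndependent_of_mem huv (by simp) (Fin.forall_fin_two.2 ⟨hu_mem, hv_mem⟩)
  have hdense : Dense (Submodule.span ℝ (tangentConeAt ℝ E p) : Set ℂ) := by
    simp only [hspan, Submodule.top_coe, dense_univ]
  exact fderiv_determined_by_nonflat_set_general hdense hf hg fun z hz => hfg z (.inl hz)
end

section
/- Let U ⊆ ℂ be a nonempty bounded open set whose frontier E = frontier U is connected, let V ⊆ ℂ be open with closure(U) ⊆ V, and let f : ℂ → ℂ be continuously real-differentiable on V (Fréchet differentiable over ℝ at each point of V with z ↦ fderiv ℝ f z continuous on V). Suppose U₁ and U₂ are nonempty disjoint open sets with U₁ ∪ U₂ = U, f is complex-differentiable at every point of U₁, and z ↦ conj(f z) is complex-differentiable at every point of U₂. Then there exists a point p ∈ closure(U₁) ∩ closure(U₂) with fderiv ℝ f p = 0. -/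
/-!
If the closures of `s` and `t` were disjoint, `frontier (s ∪ t)` would be the disjoint union of the
closed sets `frontier s` and `frontier t`. Both are nonempty because the ambient space is connected,
so a preconnected `frontier (s ∪ t)` forces the closures to meet. At a common closure point the real
derivative is a limit of `ℂ`-linear maps and also of conjugate-linear maps, hence it commutes and
anticommutes with multiplication by `I`, and so it is zero.
-/

open Set

section Frontier

variable {X : Type*} [TopologicalSpace X] {s t : Set X}

theorem frontier_subset_frontier_union_of_disjoint
    (hst : Disjoint (frontier s) (closure t)) : frontier s ⊆ frontier (s ∪ t) := by
  intro x hx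
  refine ⟨closure_mono subset_union_left hx.1, fun hx_union => hx.2 ?_⟩
  have hx_compl : x ∈ interior tᶜ := by
    rw [interior_compl]
    exact disjoint_left.1 hst hx
  have hx_inter : x ∈ interior ((s ∪ t) ∩ tᶜ) := by
    rw [interior_inter]
    exact ⟨hx_union, hx_compl⟩
  exact interior_mono (fun y hy => hy.1.resolve_right hy.2) hx_inter

theorem frontier_nonempty_of_disjoint [PreconnectedSpace X] (hst : Disjoint s t)
    (hs : s.Nonempty) (ht : t.Nonempty) : (frontier s).Nonempty :=
  nonempty_frontier_iff.2 ⟨hs, fun h => ht.ne_empty (univ_disjoint.1 (h ▸ hst))⟩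

theorem closure_inter_closure_nonempty_of_isPreconnected_frontier_union [PreconnectedSpace X]
    (hs : s.Nonempty) (ht : t.Nonempty) (hfr : IsPreconnected (frontier (s ∪ t))) :
    (closure s ∩ closure t).Nonempty := by
  by_contra h
  have hcl : Disjoint (closure s) (closure t) :=
    disjoint_iff_inter_eq_empty.2 (not_nonempty_iff_eq_empty.1 h)
  have hst : Disjoint s t := hcl.mono subset_closure subset_closure
  obtain ⟨a, ha⟩ := frontier_nonempty_of_disjoint hst hs ht
  obtain ⟨b, hb⟩ := frontier_nonempty_of_disjoint hst.symm ht hs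
  have ha_union : a ∈ frontier (s ∪ t) :=
    frontier_subset_frontier_union_of_disjoint (hcl.mono_left frontier_subset_closure) ha
  have hb_union : b ∈ frontier (s ∪ t) :=
    union_comm t s ▸ frontier_subset_frontier_union_of_disjoint
      (hcl.symm.mono_left frontier_subset_closure) hb
  have hcover : frontier (s ∪ t) ⊆ closure s ∪ closure t :=
    closure_union (s := s) ▸ frontier_subset_closure
  obtain ⟨p, -, hp⟩ := isPreconnected_closed_iff.1 hfr _ _ isClosed_closure isClosed_closure hcover
    ⟨a, ha_union, ha.1⟩ ⟨b, hb_union, hb.1⟩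
  exact h ⟨p, hp⟩

end Frontier

section Derivative

variable {E F : Type*} [NormedAddCommGroup E] [NormedSpace ℂ E]
  [NormedAddCommGroup F] [NormedSpace ℂ F] {f : E → F} {s t : Set E} {p : E}

theorem fderiv_real_I_smul (hf : DifferentiableAt ℂ f p) (v : E) :
    fderiv ℝ f p (Complex.I • v) = Complex.I • fderiv ℝ f p v := by
  rw [hf.fderiv_restrictScalars ℝ]
  exact (fderiv ℂ f p).map_smul Complex.I v

theorem fderiv_real_I_smul_of_mem_closure (hf : ∀ z ∈ s, DifferentiableAt ℂ f z)
    (hcont : ContinuousOn (fderiv ℝ f) (closure s)) (hp : p ∈ closure s) (v : E) :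
    fderiv ℝ f p (Complex.I • v) = Complex.I • fderiv ℝ f p v := by
  have hs : EqOn (fun z => fderiv ℝ f z (Complex.I • v)) (fun z => Complex.I • fderiv ℝ f z v) s :=
    fun z hz => fderiv_real_I_smul (hf z hz) v
  exact hs.of_subset_closure (hcont.clm_apply continuousOn_const)
    ((hcont.clm_apply continuousOn_const).const_smul _) subset_closure Subset.rfl hp

variable [StarAddMonoid F] [StarModule ℂ F] [ContinuousStar F]

theorem fderiv_real_I_smul_of_star (hf : DifferentiableAt ℂ (fun w => star (f w)) p) (v : E) :
    fderiv ℝ f p (Complex.I • v) = -(Complex.I • fderiv ℝ f p v) := by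
  have hstar : star (fderiv ℝ f p (Complex.I • v)) = Complex.I • star (fderiv ℝ f p v) := by
    simpa [fderiv_star] using fderiv_real_I_smul hf v
  simpa using congrArg star hstar

theorem fderiv_real_I_smul_of_star_of_mem_closure
    (hf : ∀ z ∈ s, DifferentiableAt ℂ (fun w => star (f w)) z)
    (hcont : ContinuousOn (fderiv ℝ f) (closure s)) (hp : p ∈ closure s) (v : E) :
    fderiv ℝ f p (Complex.I • v) = -(Complex.I • fderiv ℝ f p v) := by
  have hs : EqOn (fun z => fderiv ℝ f z (Complex.I • v))
      (fun z => -(Complex.I • fderiv ℝ f z v)) s :=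
    fun z hz => fderiv_real_I_smul_of_star (hf z hz) v
  exact hs.of_subset_closure (hcont.clm_apply continuousOn_const)
    ((hcont.clm_apply continuousOn_const).const_smul _).neg subset_closure Subset.rfl hp

theorem fderiv_real_eq_zero_of_mem_closure_inter_closure
    (hs : ∀ z ∈ s, DifferentiableAt ℂ f z)
    (ht : ∀ z ∈ t, DifferentiableAt ℂ (fun w => star (f w)) z)
    (hcont_s : ContinuousOn (fderiv ℝ f) (closure s))
    (hcont_t : ContinuousOn (fderiv ℝ f) (closure t))
    (hp : p ∈ closure s ∩ closure t) : fderiv ℝ f p = 0 := by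
  have : IsAddTorsionFree F := .of_isTorsionFree ℂ F
  ext v
  have hself : Complex.I • fderiv ℝ f p v = -(Complex.I • fderiv ℝ f p v) :=
    (fderiv_real_I_smul_of_mem_closure hs hcont_s hp.1 v).symm.trans
      (fderiv_real_I_smul_of_star_of_mem_closure ht hcont_t hp.2 v)
  exact (smul_eq_zero.1 (self_eq_neg.1 hself)).resolve_left Complex.I_ne_zero

theorem exists_fderiv_zero_of_mixed_orientations_general
    (hs_ne : s.Nonempty) (ht_ne : t.Nonempty) (hfr : IsPreconnected (frontier (s ∪ t)))
    (hdiff : ∀ z ∈ closure (s ∪ t), DifferentiableAt ℝ f z)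
    (hcont : ContinuousOn (fderiv ℝ f) (closure (s ∪ t)))
    (hs : ∀ z ∈ s, DifferentiableAt ℂ f z)
    (ht : ∀ z ∈ t, DifferentiableAt ℂ (fun w => star (f w)) z) :
    ∃ p ∈ closure s ∩ closure t, HasFDerivAt f (0 : E →L[ℝ] F) p := by
  have hs_sub : closure s ⊆ closure (s ∪ t) := closure_mono subset_union_left
  have ht_sub : closure t ⊆ closure (s ∪ t) := closure_mono subset_union_right
  obtain ⟨p, hp⟩ :=
    closure_inter_closure_nonempty_of_isPreconnected_frontier_union hs_ne ht_ne hfr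
  have hzero : fderiv ℝ f p = 0 := fderiv_real_eq_zero_of_mem_closure_inter_closure hs ht
    (hcont.mono hs_sub) (hcont.mono ht_sub) hp
  exact ⟨p, hp, hzero ▸ (hdiff p (hs_sub hp.1)).hasFDerivAt⟩

end Derivative

/-- If `U` is a nonempty bounded open set with connected frontier, `f` is C¹
over ℝ on a neighborhood `V` of `closure U`, and `U` is partitioned into
nonempty disjoint open sets `U₁`, `U₂` on which `f` is respectively
holomorphic and conjugate-holomorphic, then there is a common closure point
of `U₁` and `U₂` at which the real derivative of `f` vanishes. -/
theorem exists_fderiv_zero_of_mixed_orientations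
    (U : Set ℂ) (hU : IsOpen U) (hUne : U.Nonempty)
    (hUb : Bornology.IsBounded U)
    (hfr : IsPreconnected (frontier U))
    (V : Set ℂ) (hV : IsOpen V) (hUV : closure U ⊆ V)
    (f : ℂ → ℂ)
    (hdiff : ∀ z ∈ V, DifferentiableAt ℝ f z)
    (hcont : ContinuousOn (fun z => fderiv ℝ f z) V)
    (U₁ U₂ : Set ℂ) (hU₁ : IsOpen U₁) (hU₂ : IsOpen U₂)
    (hne₁ : U₁.Nonempty) (hne₂ : U₂.Nonempty)
    (hdisj : Disjoint U₁ U₂) (hunion : U₁ ∪ U₂ = U)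
    (h₁ : ∀ z ∈ U₁, DifferentiableAt ℂ f z)
    (h₂ : ∀ z ∈ U₂, DifferentiableAt ℂ (fun w => (starRingEnd ℂ) (f w)) z) :
    ∃ p ∈ closure U₁ ∩ closure U₂, fderiv ℝ f p = 0 := by
  subst hunion
  obtain ⟨p, hp, hzero⟩ := exists_fderiv_zero_of_mixed_orientations_general hne₁ hne₂ hfr
    (fun z hz => hdiff z (hUV hz)) (hcont.mono hUV) h₁ h₂
  exact ⟨p, hp, hzero.fderiv⟩
end
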